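/- arXiv:2009.02664 — 2 statements merged into one kernel-verified Lean document; each statement's English description precedes it below -/
import Mathlib

section
/- For a nontrivial connected graph G, srd(G) = 2 if and only if every block of G is either a single edge K_2 or a cycle, and at least one block of G is a cycle. -/
open SimpleGraph

/-- `F` is an edge-cut of `G` separating `u` and `v`. -/
def CutsBetween {V : Type*} (G : SimpleGraph V) (u v : V) (F : Finset (Sym2 V)) : Prop :=
  ↑F ⊆ G.edgeSet ∧ ¬ (G.deleteEdges ↑F).Reachable u v

/-- `lam G u v` is the minimum number of edges in an edge-cut of `G` separating `u` and `v`. -/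
noncomputable def lam {V : Type*} (G : SimpleGraph V) (u v : V) : ℕ :=
  sInf {n | ∃ F : Finset (Sym2 V), CutsBetween G u v F ∧ F.card = n}

/-- `c` is a strong rainbow disconnection coloring of `G`: every pair of distinct vertices
admits a rainbow minimum edge-cut separating them. -/
def IsSRDColoring {V : Type*} (G : SimpleGraph V) (c : Sym2 V → ℕ) : Prop :=
  ∀ u v : V, u ≠ v → ∃ F : Finset (Sym2 V),
    CutsBetween G u v F ∧ F.card = lam G u v ∧ Set.InjOn c ↑F

/-- The strong rainbow disconnection number of `G`. -/
noncomputable def srd {V : Type*} (G : SimpleGraph V) : ℕ :=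
  sInf {k | ∃ c : Sym2 V → ℕ, (∀ e ∈ G.edgeSet, c e < k) ∧ IsSRDColoring G c}

/-- `B` is a block of `G`: a maximal connected subgraph without cut-vertices. -/
def IsBlock {V : Type*} (G : SimpleGraph V) (B : G.Subgraph) : Prop :=
  B.verts.Nonempty ∧ B.coe.Connected ∧
  (∀ v : B.verts, (B.coe.induce {w | w ≠ v}).Preconnected) ∧
  ∀ B' : G.Subgraph, B ≤ B' → B'.coe.Connected →
    (∀ v : B'.verts, (B'.coe.induce {w | w ≠ v}).Preconnected) → B = B'

/-- `H` is a cycle graph: connected and 2-regular. -/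
def IsCycleGraph {W : Type*} (H : SimpleGraph W) : Prop :=
  H.Connected ∧ ∀ v : W, Nat.card (H.neighborSet v) = 2

/-- The edges of `B` with no endpoint in `S`, as a graph on the ambient vertex type. -/
def avoiding {V : Type*} {G : SimpleGraph V} (B : G.Subgraph) (S : Set V) : SimpleGraph V where
  Adj x y := B.Adj x y ∧ x ∉ S ∧ y ∉ S
  symm := ⟨fun _ _ h => ⟨h.1.symm, h.2.2, h.2.1⟩⟩
  loopless := ⟨fun _ h => (B.adj_sub h.1).ne rfl⟩

/-- `B` stays connected after the removal of at most one vertex. -/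
def IsNonseparable {V : Type*} {G : SimpleGraph V} (B : G.Subgraph) : Prop :=
  ∀ S : Set V, S.Subsingleton → ∀ x ∈ B.verts, ∀ y ∈ B.verts, x ∉ S → y ∉ S →
    (avoiding B S).Reachable x y

section Nonseparable

variable {V : Type*} {G : SimpleGraph V}

lemma avoiding_mono {B C : G.Subgraph} (h : B ≤ C) (S : Set V) : avoiding B S ≤ avoiding C S :=
  fun _ _ hxy => ⟨h.2 hxy.1, hxy.2⟩

lemma avoiding_le (B : G.Subgraph) (S : Set V) : avoiding B S ≤ G :=
  fun _ _ hxy => B.adj_sub hxy.1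

lemma avoiding_reachable_of_walk {B : G.Subgraph} {S : Set V} {x y : V} (p : G.Walk x y)
    (hB : p.toSubgraph ≤ B) (hS : ∀ z ∈ p.support, z ∉ S) : (avoiding B S).Reachable x y := by
  refine ⟨p.transfer _ ?_⟩
  rintro ⟨a, b⟩ he
  have he : s(a, b) ∈ p.edges := he
  exact ⟨hB.2 (p.adj_toSubgraph_iff_mem_edges.2 he),
    hS _ (p.fst_mem_support_of_mem_edges he), hS _ (p.snd_mem_support_of_mem_edges he)⟩

lemma coe_reachable_of_avoiding {B : G.Subgraph} {x y : V} (h : (avoiding B ∅).Reachable x y)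
    (hx : x ∈ B.verts) (hy : y ∈ B.verts) : B.coe.Reachable ⟨x, hx⟩ ⟨y, hy⟩ := by
  obtain ⟨p⟩ := h
  induction p with
  | nil => rfl
  | cons h p ih =>
    have hadj : B.coe.Adj ⟨_, hx⟩ ⟨_, B.edge_vert h.1.symm⟩ := h.1
    exact hadj.reachable.trans (ih _ hy)

lemma induce_reachable_of_avoiding {B : G.Subgraph} {v : B.verts} {x y : V}
    (h : (avoiding B {v.1}).Reachable x y) (hx : x ∈ B.verts) (hy : y ∈ B.verts)
    (hxv : (⟨x, hx⟩ : B.verts) ≠ v) (hyv : (⟨y, hy⟩ : B.verts) ≠ v) :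
    (B.coe.induce {w | w ≠ v}).Reachable ⟨⟨x, hx⟩, hxv⟩ ⟨⟨y, hy⟩, hyv⟩ := by
  obtain ⟨p⟩ := h
  induction p with
  | nil => rfl
  | @cons a b c h p ih =>
    have hbv : (⟨b, B.edge_vert h.1.symm⟩ : B.verts) ≠ v := fun hb => h.2.2 (by simp [← hb])
    have hadj : (B.coe.induce {w | w ≠ v}).Adj ⟨⟨_, hx⟩, hxv⟩
      ⟨⟨_, B.edge_vert h.1.symm⟩, hbv⟩ := h.1
    exact hadj.reachable.trans (ih _ hy _ hyv)

lemma isNonseparable_iff {B : G.Subgraph} (hB : B.verts.Nonempty) :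
    IsNonseparable B ↔ B.coe.Connected ∧
      ∀ v : B.verts, (B.coe.induce {w | w ≠ v}).Preconnected := by
  constructor
  · intro h
    have : Nonempty B.verts := hB.to_subtype
    refine ⟨⟨fun x y => coe_reachable_of_avoiding
      (h ∅ Set.subsingleton_empty x x.2 y y.2 id id) x.2 y.2⟩, fun v x y => ?_⟩
    refine induce_reachable_of_avoiding (h {v.1} Set.subsingleton_singleton x x.1.2 y y.1.2 ?_ ?_)
      x.1.2 y.1.2 x.2 y.2
    · exact fun hx => x.2 (Subtype.ext hx)
    · exact fun hy => y.2 (Subtype.ext hy)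
  · rintro ⟨hc, hv⟩ S hS x hx y hy hxS hyS
    by_cases hSB : ∃ v ∈ S, v ∈ B.verts
    · obtain ⟨v, hvS, hvB⟩ := hSB
      obtain rfl : S = {v} := hS.eq_singleton_of_mem hvS
      let f : (B.coe.induce {w | w ≠ ⟨v, hvB⟩}) →g avoiding B {v} :=
        ⟨fun z => z.1.1, fun {a b} hab => ⟨hab, fun ha => a.2 (Subtype.ext ha),
          fun hb => b.2 (Subtype.ext hb)⟩⟩
      exact (hv ⟨v, hvB⟩ ⟨⟨x, hx⟩, fun h => hxS (congrArg Subtype.val h)⟩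
        ⟨⟨y, hy⟩, fun h => hyS (congrArg Subtype.val h)⟩).map f
    · push Not at hSB
      let f : B.coe →g avoiding B S :=
        ⟨fun z => z.1, fun {a b} hab => ⟨hab, fun ha => hSB _ ha a.2, fun hb => hSB _ hb b.2⟩⟩
      exact (hc.preconnected ⟨x, hx⟩ ⟨y, hy⟩).map f

lemma IsBlock.isNonseparable {B : G.Subgraph} (h : IsBlock G B) : IsNonseparable B :=
  (isNonseparable_iff h.1).2 ⟨h.2.1, h.2.2.1⟩

lemma IsNonseparable.exists_isBlock_ge [Finite V] {C : G.Subgraph} (hC : IsNonseparable C)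
    (hne : C.verts.Nonempty) : ∃ B, IsBlock G B ∧ C ≤ B := by
  obtain ⟨B, hCB, hB⟩ := Finite.exists_le_maximal
    (p := fun B : G.Subgraph => B.coe.Connected ∧
      ∀ v : B.verts, (B.coe.induce {w | w ≠ v}).Preconnected) ((isNonseparable_iff hne).1 hC)
  exact ⟨B, ⟨hne.mono hCB.1, hB.prop.1, hB.prop.2,
    fun B' hle h₁ h₂ => hB.eq_of_le ⟨h₁, h₂⟩ hle⟩, hCB⟩

lemma IsNonseparable.sup {B C : G.Subgraph} (hB : IsNonseparable B) (hC : IsNonseparable C)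
    {p q : V} (hpq : p ≠ q) (hpB : p ∈ B.verts) (hqB : q ∈ B.verts) (hpC : p ∈ C.verts)
    (hqC : q ∈ C.verts) : IsNonseparable (B ⊔ C) := by
  intro S hS
  obtain ⟨r, hrB, hrC, hrS⟩ : ∃ r, r ∈ B.verts ∧ r ∈ C.verts ∧ r ∉ S := by
    by_cases hp : p ∈ S
    · exact ⟨q, hqB, hqC, fun hq => hpq (hS hp hq)⟩
    · exact ⟨p, hpB, hpC, hp⟩
  have key : ∀ x ∈ (B ⊔ C).verts, x ∉ S → (avoiding (B ⊔ C) S).Reachable x r := by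
    rintro x (hx | hx) hxS
    · exact (hB S hS x hx r hrB hxS hrS).mono (avoiding_mono le_sup_left S)
    · exact (hC S hS x hx r hrC hxS hrS).mono (avoiding_mono le_sup_right S)
  exact fun x hx y hy hxS hyS => (key x hx hxS).trans (key y hy hyS).symm

lemma isNonseparable_subgraphOfAdj {u v : V} (h : G.Adj u v) :
    IsNonseparable (G.subgraphOfAdj h) := by
  intro S _ x hx y hy hxS hyS
  by_cases hxy : x = y
  · rw [hxy]
  · refine SimpleGraph.Adj.reachable ⟨?_, hxS, hyS⟩
    simp only [subgraphOfAdj_verts, Set.mem_insert_iff, Set.mem_singleton_iff] at hx hy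
    rcases hx with rfl | rfl <;> rcases hy with rfl | rfl <;> simp_all

lemma isNonseparable_toSubgraph_of_isCycle {u : V} {c : G.Walk u u} (hc : c.IsCycle) :
    IsNonseparable c.toSubgraph := by
  classical
  intro S hS
  by_cases hSc : ∃ v ∈ S, v ∈ c.support
  · obtain ⟨v, hvS, hvc⟩ := hSc
    obtain rfl : S = {v} := hS.eq_singleton_of_mem hvS
    rw [← c.toSubgraph_rotate hvc]
    have hc' := hc.rotate hvc
    generalize c.rotate v hvc = d at hc'
    cases d with
    | nil => exact absurd hc' (by simp)
    | @cons _ w _ hvw p =>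
      have hp : p.IsPath := ((Walk.cons_isCycle_iff _ _).1 hc').1
      have key : ∀ x ∈ (Walk.cons hvw p).toSubgraph.verts, x ∉ ({v} : Set V) →
          (avoiding (Walk.cons hvw p).toSubgraph {v}).Reachable w x := by
        intro x hx hxv
        have hxp : x ∈ p.support := by
          rw [Walk.mem_verts_toSubgraph, Walk.support_cons, List.mem_cons] at hx
          exact hx.resolve_left hxv
        refine avoiding_reachable_of_walk (p.takeUntil x hxp) ?_ ?_
        · refine le_trans ?_ (le_sup_right : p.toSubgraph ≤ _)
          conv_rhs => rw [← p.take_spec hxp]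
          rw [Walk.toSubgraph_append]
          exact le_sup_left
        · rintro z hz rfl
          exact Walk.endpoint_notMem_support_takeUntil hp hxp (fun h => hxv h.symm) hz
      exact fun x hx y hy hxS hyS => (key x hx hxS).symm.trans (key y hy hyS)
  · push Not at hSc
    have key : ∀ x ∈ c.toSubgraph.verts, (avoiding c.toSubgraph S).Reachable u x := by
      intro x hx
      have hxc : x ∈ c.support := c.mem_verts_toSubgraph.1 hx
      refine avoiding_reachable_of_walk (c.takeUntil x hxc) ?_
        fun z hz hzS => hSc z hzS (c.support_takeUntil_subset_support hxc hz)
      conv_rhs => rw [← c.take_spec hxc]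
      rw [Walk.toSubgraph_append]
      exact le_sup_left
    exact fun x hx y hy _ _ => (key x hx).symm.trans (key y hy)

lemma card_coe_neighborSet (B : G.Subgraph) (v : B.verts) :
    Nat.card (B.coe.neighborSet v) = (B.neighborSet v).ncard :=
  Nat.card_congr (Subgraph.coeNeighborSetEquiv v)

/-- A subgraph containing a cycle has more than two vertices. -/
lemma card_verts_ne_two_of_isCycle [Finite V] {u : V} {c : G.Walk u u} (hc : c.IsCycle)
    {B : G.Subgraph} (hle : c.toSubgraph ≤ B) : Nat.card B.verts ≠ 2 := by
  intro h2
  have h := hc.ncard_neighborSet_toSubgraph_eq_two c.start_mem_support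
  have hsub : insert u (c.toSubgraph.neighborSet u) ⊆ B.verts := by
    rintro x (rfl | hx)
    · exact hle.1 c.start_mem_verts_toSubgraph
    · exact hle.1 (c.toSubgraph.edge_vert hx.symm)
  have hu : u ∉ c.toSubgraph.neighborSet u := fun h => (c.toSubgraph.adj_sub h).ne rfl
  have := Set.ncard_le_ncard hsub
  rw [Set.ncard_insert_of_notMem hu, h] at this
  have h2' : B.verts.ncard = 2 := h2
  omega

/-- A cycle graph containing a cycle has no further edges. -/
lemma adj_toSubgraph_of_isCycleGraph [Finite V] {u : V} {c : G.Walk u u} (hc : c.IsCycle)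
    {B : G.Subgraph} (hB : IsCycleGraph B.coe) (hle : c.toSubgraph ≤ B) {x y : V}
    (hxy : B.Adj x y) : c.toSubgraph.Adj x y := by
  have key : ∀ x ∈ c.toSubgraph.verts, ∀ y, B.Adj x y → c.toSubgraph.Adj x y := by
    intro x hx y hxy
    have h₁ := hc.ncard_neighborSet_toSubgraph_eq_two (c.mem_verts_toSubgraph.1 hx)
    have h₂ := hB.2 ⟨x, hle.1 hx⟩
    rw [card_coe_neighborSet] at h₂
    have : c.toSubgraph.neighborSet x = B.neighborSet x :=
      Set.eq_of_subset_of_ncard_le (fun z hz => hle.2 hz) (by simp only at h₂; omega)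
    exact this.symm.subset hxy
  refine key x ?_ y hxy
  obtain ⟨p⟩ := hB.1.preconnected ⟨u, hle.1 c.start_mem_verts_toSubgraph⟩ ⟨x, B.edge_vert hxy⟩
  suffices ∀ a b : B.verts, B.coe.Walk a b → a.1 ∈ c.toSubgraph.verts →
      b.1 ∈ c.toSubgraph.verts from this _ _ p c.start_mem_verts_toSubgraph
  intro a b p ha
  induction p with
  | nil => exact ha
  | cons h p ih => exact ih (c.toSubgraph.edge_vert (key _ ha _ h).symm)

end Nonseparable

section Cuts

variable {V : Type*} {G : SimpleGraph V}

lemma lam_le_card {u v : V} {F : Finset (Sym2 V)} (h : CutsBetween G u v F) :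
    lam G u v ≤ F.card :=
  Nat.sInf_le ⟨F, h, rfl⟩

lemma CutsBetween.exists_mem_edges {u v : V} {F : Finset (Sym2 V)} (h : CutsBetween G u v F)
    (p : G.Walk u v) : ∃ e ∈ p.edges, e ∈ F := by
  by_contra! hp
  exact h.2 ⟨p.toDeleteEdges _ hp⟩

/-- The edges of `G` joining different components of `K` separate any two vertices that `K` does
not connect. -/
lemma cutsBetween_of_not_reachable {K : SimpleGraph V} {F : Finset (Sym2 V)}
    (hF : ∀ x y, s(x, y) ∈ F ↔ G.Adj x y ∧ ¬ K.Reachable x y) {u v : V}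
    (huv : ¬ K.Reachable u v) : CutsBetween G u v F := by
  refine ⟨?_, fun ⟨p⟩ => huv ?_⟩
  · rintro ⟨x, y⟩ h
    exact ((hF x y).1 h).1
  · clear huv
    induction p with
    | nil => rfl
    | @cons a b c h p ih =>
      rw [deleteEdges_adj, Finset.mem_coe, hF] at h
      exact (not_not.1 fun hab => h.2 ⟨h.1, hab⟩).trans (ih ⟨p⟩)

lemma SimpleGraph.Walk.exists_walk_to_set {a c : V} (q : G.Walk c a) (S : Set V) (ha : a ∈ S) :
    ∃ m ∈ S, ∃ r : G.Walk c m, ∀ e ∈ r.edges, ∃ x ∈ e, x ∉ S := by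
  induction q with
  | nil => exact ⟨_, ha, .nil, by simp⟩
  | @cons c d _ h q ih =>
    by_cases hc : c ∈ S
    · exact ⟨c, hc, .nil, by simp⟩
    · obtain ⟨m, hm, r, hr⟩ := ih ha
      refine ⟨m, hm, .cons h r, fun e he => ?_⟩
      rw [Walk.edges_cons, List.mem_cons] at he
      rcases he with rfl | he
      · exact ⟨c, Sym2.mem_mk_left _ _, hc⟩
      · exact hr e he

/-- Three connected vertices can be joined to a common vertex by edge-disjoint walks. -/
lemma SimpleGraph.Reachable.exists_edge_disjoint_walks {a b c : V} (hab : G.Reachable a b)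
    (hca : G.Reachable c a) :
    ∃ m, ∃ (p : G.Walk a m) (q : G.Walk b m) (r : G.Walk c m),
      p.edges.Disjoint q.edges ∧ p.edges.Disjoint r.edges ∧ q.edges.Disjoint r.edges := by
  classical
  obtain ⟨w, hw⟩ := hab.exists_isPath
  obtain ⟨m, hm, r, hr⟩ := hca.some.exists_walk_to_set {x | x ∈ w.support} w.start_mem_support
  have key : ∀ e ∈ w.edges, e ∉ r.edges := by
    intro e he her
    obtain ⟨x, hxe, hx⟩ := hr e her
    exact hx (w.mem_support_of_mem_edges he hxe)
  refine ⟨m, w.takeUntil m hm, (w.dropUntil m hm).reverse, r, ?_, ?_, ?_⟩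
  · simpa [List.Disjoint] using hw.isTrail.disjoint_edges_takeUntil_dropUntil hm
  · exact fun e he => key e (w.edges_takeUntil_subset_edges hm he)
  · intro e he
    rw [Walk.edges_reverse, List.mem_reverse] at he
    exact key e (w.edges_dropUntil_subset_edges hm he)

lemma notMem_of_mem_edges_avoiding {B : G.Subgraph} {S : Set V} {x y z : V}
    (p : (avoiding B S).Walk x y) {e : Sym2 V} (he : e ∈ p.edges) (hz : z ∈ e) : z ∉ S := by
  have := p.edges_subset_edgeSet he
  induction e with
  | _ a b =>
    rcases Sym2.mem_iff.1 hz with rfl | rfl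
    · exact this.2.1
    · exact this.2.2

/-- A vertex of degree at least three in a nonseparable subgraph cannot be separated from some
other vertex by two edges. -/
lemma IsNonseparable.exists_three_le_card_of_cutsBetween [Finite V] {B : G.Subgraph}
    (hB : IsNonseparable B) {v : V} (hv : 2 < (B.neighborSet v).ncard) :
    ∃ m, m ≠ v ∧ ∀ F, CutsBetween G v m F → 3 ≤ F.card := by
  obtain ⟨a, b, c, ha, hb, hc, hab, hac, hbc⟩ := (Set.two_lt_ncard_iff).1 hv
  have hne : ∀ x, B.Adj v x → x ∉ ({v} : Set V) := fun x hx => (B.adj_sub hx).ne'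
  have hreach : ∀ x y, B.Adj v x → B.Adj v y → (avoiding B {v}).Reachable x y := fun x y hx hy =>
    hB {v} Set.subsingleton_singleton x (B.edge_vert hx.symm) y (B.edge_vert hy.symm)
      (hne x hx) (hne y hy)
  obtain ⟨m, p, q, r, hpq, hpr, hqr⟩ :=
    (hreach a b ha hb).exists_edge_disjoint_walks (hreach c a hc ha)
  refine ⟨m, ?_, fun F hF => ?_⟩
  · rintro rfl
    cases p.reverse with
    | nil => exact hne _ ha rfl
    | cons h _ => exact h.2.1 rfl
  · have hmeet : ∀ x (_ : B.Adj v x) (w : (avoiding B {v}).Walk x m),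
        ∃ e ∈ F, e = s(v, x) ∨ e ∈ w.edges := by
      intro x hx w
      obtain ⟨e, he, heF⟩ := hF.exists_mem_edges
        (.cons (B.adj_sub hx) (w.mapLe (avoiding_le B {v})))
      refine ⟨e, heF, ?_⟩
      simpa using he
    have hdisj : ∀ x y (_ : x ≠ y) (w : (avoiding B {v}).Walk x m)
        (w' : (avoiding B {v}).Walk y m), w.edges.Disjoint w'.edges → ∀ e e',
        (e = s(v, x) ∨ e ∈ w.edges) → (e' = s(v, y) ∨ e' ∈ w'.edges) → e ≠ e' := by
      rintro x y hxy w w' hd e e' (rfl | he) (rfl | he') h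
      · exact hxy (Sym2.congr_right.1 h)
      · exact notMem_of_mem_edges_avoiding w' (h ▸ he') (Sym2.mem_mk_left v x) rfl
      · exact notMem_of_mem_edges_avoiding w (h ▸ he) (Sym2.mem_mk_left v y) rfl
      · exact hd he (h ▸ he')
    obtain ⟨e₁, h₁, h₁'⟩ := hmeet a ha p
    obtain ⟨e₂, h₂, h₂'⟩ := hmeet b hb q
    obtain ⟨e₃, h₃, h₃'⟩ := hmeet c hc r
    exact Finset.two_lt_card.2 ⟨e₁, h₁, e₂, h₂, e₃, h₃, hdisj _ _ hab _ _ hpq _ _ h₁' h₂',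
      hdisj _ _ hac _ _ hpr _ _ h₁' h₃', hdisj _ _ hbc _ _ hqr _ _ h₂' h₃'⟩

lemma SimpleGraph.Reachable.exists_adj_of_ne {x y : V} (h : G.Reachable x y) (hxy : x ≠ y) :
    ∃ z, G.Adj x z := by
  obtain ⟨p⟩ := h
  cases p with
  | nil => exact absurd rfl hxy
  | cons h _ => exact ⟨_, h⟩

/-- In a nonseparable subgraph with at least three vertices every vertex has degree at least
two. -/
lemma IsNonseparable.one_lt_ncard_neighborSet [Finite V] {B : G.Subgraph}
    (hB : IsNonseparable B) (h3 : 2 < B.verts.ncard) {v : V} (hv : v ∈ B.verts) :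
    1 < (B.neighborSet v).ncard := by
  obtain ⟨u, huB, huv⟩ := Set.exists_ne_of_one_lt_ncard (by omega : 1 < B.verts.ncard) v
  obtain ⟨w, hw, -⟩ := (hB ∅ Set.subsingleton_empty v hv u huB id id).exists_adj_of_ne huv.symm
  have hvw := (B.adj_sub hw).ne
  obtain ⟨z, hzB, hz⟩ : ∃ z ∈ B.verts, z ∉ ({v, w} : Set V) := by
    refine Set.exists_mem_notMem_of_ncard_lt_ncard ?_
    rwa [Set.ncard_pair hvw]
  simp only [Set.mem_insert_iff, Set.mem_singleton_iff, not_or] at hz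
  obtain ⟨t, ht, -, htw⟩ := (hB {w} Set.subsingleton_singleton v hv z hzB hvw
    hz.2).exists_adj_of_ne (Ne.symm hz.1)
  exact (Set.one_lt_ncard_iff).2 ⟨w, t, hw, ht, fun h => htw h.symm⟩

/-- Two adjacent vertices of a nonseparable subgraph in which one of them has degree at least two
cannot be separated by a single edge. -/
lemma IsNonseparable.two_le_card_of_cutsBetween {B : G.Subgraph} (hB : IsNonseparable B)
    {u v w : V} (huv : B.Adj u v) (huw : B.Adj u w) (hvw : v ≠ w) {F : Finset (Sym2 V)}
    (hF : CutsBetween G u v F) : 2 ≤ F.card := by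
  obtain ⟨e, he, heF⟩ := hF.exists_mem_edges (.cons (B.adj_sub huv) .nil)
  obtain ⟨p⟩ := hB {u} Set.subsingleton_singleton w (B.edge_vert huw.symm) v
    (B.edge_vert huv.symm) (B.adj_sub huw).ne' (B.adj_sub huv).ne'
  obtain ⟨f, hf, hfF⟩ := hF.exists_mem_edges
    (.cons (B.adj_sub huw) (p.mapLe (avoiding_le B {u})))
  refine Finset.one_lt_card.2 ⟨e, heF, f, hfF, ?_⟩
  obtain rfl : e = s(u, v) := by simpa using he
  rintro rfl
  have hf' : s(u, v) = s(u, w) ∨ s(u, v) ∈ p.edges := by simpa using hf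
  rcases hf' with hf | hf
  · exact hvw (Sym2.congr_right.1 hf)
  · exact notMem_of_mem_edges_avoiding p hf (Sym2.mem_mk_left u v) rfl

lemma SimpleGraph.IsTree.exists_not_reachable_deleteEdges {T : SimpleGraph V} (hT : T.IsTree)
    {u v : V} (huv : u ≠ v) : ∃ e ∈ T.edgeSet, ¬ (T.deleteEdges {e}).Reachable u v := by
  obtain ⟨p, hp⟩ := (hT.connected.preconnected u v).exists_isPath
  cases p with
  | nil => exact absurd rfl huv
  | @cons _ w _ h p =>
    refine ⟨s(u, w), h, fun hr => ?_⟩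
    refine isBridge_iff.1 (isAcyclic_iff_forall_adj_isBridge.1 hT.isAcyclic h) (hr.trans ?_)
    refine (reachable_deleteEdges_iff_exists_walk.2 ⟨p, fun he => ?_⟩).symm
    exact ((Walk.cons_isPath_iff h p).1 hp).2 (p.fst_mem_support_of_mem_edges he)

open Classical in
/-- If every fundamental cut of a spanning tree contains at most one non-tree edge, then coloring
the tree edges by `0` and the other edges by `1` is a strong rainbow disconnection coloring. -/
lemma SimpleGraph.IsTree.isSRDColoring [Finite V] {T : SimpleGraph V} (hT : T.IsTree)
    (h : ∀ e ∈ T.edgeSet, ∀ x y x' y', G.Adj x y → ¬ T.Adj x y → G.Adj x' y' → ¬ T.Adj x' y' →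
      ¬ (T.deleteEdges {e}).Reachable x y → ¬ (T.deleteEdges {e}).Reachable x' y' →
      s(x, y) = s(x', y')) :
    IsSRDColoring G fun e => if e ∈ T.edgeSet then 0 else 1 := by
  intro u v huv
  obtain ⟨e, he, hr⟩ := hT.exists_not_reachable_deleteEdges huv
  obtain ⟨F, hF⟩ : ∃ F : Finset (Sym2 V), ∀ x y, s(x, y) ∈ F ↔
      G.Adj x y ∧ ¬ (T.deleteEdges {e}).Reachable x y := by
    refine ⟨(Set.toFinite {f : Sym2 V | ∃ x y, f = s(x, y) ∧ G.Adj x y ∧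
      ¬ (T.deleteEdges {e}).Reachable x y}).toFinset, fun x y => ?_⟩
    rw [Set.Finite.mem_toFinset]
    constructor
    · rintro ⟨x', y', hxy, hG, hn⟩
      rcases Sym2.eq_iff.1 hxy with ⟨rfl, rfl⟩ | ⟨rfl, rfl⟩
      · exact ⟨hG, hn⟩
      · exact ⟨hG.symm, fun h => hn h.symm⟩
    · exact fun h => ⟨x, y, rfl, h⟩
  have hcut := cutsBetween_of_not_reachable hF hr
  have htree : ∀ f ∈ F, f ∈ T.edgeSet → f = e := by
    rintro ⟨x, y⟩ hf hfT
    by_contra hne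
    exact ((hF x y).1 hf).2 (Adj.reachable ((deleteEdges_adj).2 ⟨hfT, hne⟩))
  have hinj : Set.InjOn (fun e => if e ∈ T.edgeSet then 0 else 1) (F : Set (Sym2 V)) := by
    intro f hf g hg hfg
    by_cases hfT : f ∈ T.edgeSet <;> by_cases hgT : g ∈ T.edgeSet
    · rw [htree f hf hfT, htree g hg hgT]
    · simp [hfT, hgT] at hfg
    · simp [hfT, hgT] at hfg
    · induction f with | _ x y =>
      induction g with | _ x' y' =>
      obtain ⟨h₁, h₂⟩ := (hF x y).1 hf
      obtain ⟨h₃, h₄⟩ := (hF x' y').1 hg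
      exact h e he x y x' y' h₁ hfT h₃ hgT h₂ h₄
  by_cases hlam : 2 ≤ lam G u v
  · refine ⟨F, hcut, le_antisymm (le_trans ?_ hlam) (lam_le_card hcut), hinj⟩
    refine (Finset.card_le_card_of_injOn (t := Finset.range 2) _ ?_ hinj).trans (by simp)
    intro f _
    by_cases hf : f ∈ T.edgeSet <;> simp [hf]
  · obtain ⟨F', hF', hcard⟩ := Nat.sInf_mem
      (s := {n | ∃ F : Finset (Sym2 V), CutsBetween G u v F ∧ F.card = n}) ⟨_, F, hcut, rfl⟩
    refine ⟨F', hF', hcard, ?_⟩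
    have : F'.card ≤ 1 := by
      change F'.card = lam G u v at hcard
      omega
    exact fun a ha b hb _ => Finset.card_le_one.1 this a ha b hb

/-- The cycle closed by a non-tree edge. -/
lemma SimpleGraph.IsTree.exists_isCycle {T : SimpleGraph V} (hT : T.IsTree) (hle : T ≤ G)
    {x y a b : V} (hxy : G.Adj x y) (hn : ¬ T.Adj x y)
    (hr : ¬ (T.deleteEdges {s(a, b)}).Reachable x y) :
    ∃ c : G.Walk x x, c.IsCycle ∧ c.toSubgraph.Adj a b ∧ c.toSubgraph.Adj x y ∧
      ∀ z w, c.toSubgraph.Adj z w → T.Adj z w ∨ s(z, w) = s(x, y) := by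
  obtain ⟨p, hp⟩ := (hT.connected.preconnected y x).exists_isPath
  have hab : s(a, b) ∈ p.edges := by
    by_contra hab
    exact hr (reachable_deleteEdges_iff_exists_walk.2 ⟨p, hab⟩).symm
  have hpT : ∀ z w, s(z, w) ∈ p.edges → T.Adj z w := fun z w h => p.edges_subset_edgeSet h
  refine ⟨.cons hxy (p.mapLe hle), ?_, ?_, ?_, fun z w hzw => ?_⟩
  · rw [Walk.cons_isCycle_iff]
    exact ⟨(Walk.isPath_mapLe hle).2 hp, fun h => hn (hpT _ _ (by simpa using h))⟩
  · rw [Walk.adj_toSubgraph_iff_mem_edges]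
    simp [hab]
  · rw [Walk.adj_toSubgraph_iff_mem_edges]
    simp
  · rw [Walk.adj_toSubgraph_iff_mem_edges, Walk.edges_cons, List.mem_cons, Walk.edges_mapLe_eq_edges] at hzw
    exact hzw.symm.imp_left (hpT z w)

end Cuts

section Characterization

variable {V : Type*} {G : SimpleGraph V}

lemma exists_isSRDColoring_lt_srd (h : srd G ≠ 0) :
    ∃ c : Sym2 V → ℕ, (∀ e ∈ G.edgeSet, c e < srd G) ∧ IsSRDColoring G c :=
  Nat.sInf_mem (Nat.nonempty_of_pos_sInf (Nat.pos_of_ne_zero h))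

lemma card_le_of_injOn_lt {F : Finset (Sym2 V)} {u v : V} (hF : CutsBetween G u v F)
    {c : Sym2 V → ℕ} {k : ℕ} (hc : ∀ e ∈ G.edgeSet, c e < k)
    (hinj : Set.InjOn c (F : Set (Sym2 V))) : F.card ≤ k := by
  simpa using Finset.card_le_card_of_injOn (t := Finset.range k) c
    (fun e he => by simpa using hc e (hF.1 he)) hinj

lemma two_le_of_isSRDColoring_of_isCycleGraph {B : G.Subgraph} (hB : IsNonseparable B)
    (hc : IsCycleGraph B.coe) {c : Sym2 V → ℕ} {k : ℕ} (hck : ∀ e ∈ G.edgeSet, c e < k)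
    (hsrd : IsSRDColoring G c) : 2 ≤ k := by
  obtain ⟨u⟩ := hc.1.nonempty
  have h2 := hc.2 u
  rw [card_coe_neighborSet] at h2
  obtain ⟨v, w, hvw, hs⟩ := Set.ncard_eq_two.1 h2
  have hv : B.Adj u v := (hs.symm.subset (by simp) : v ∈ B.neighborSet u)
  have hw : B.Adj u w := (hs.symm.subset (by simp) : w ∈ B.neighborSet u)
  obtain ⟨F, hF, -, hinj⟩ := hsrd u v (B.adj_sub hv).ne
  exact (hB.two_le_card_of_cutsBetween hv hw hvw hF).trans (card_le_of_injOn_lt hF hck hinj)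

variable [Finite V]

lemma IsBlock.two_le_card_verts [Nontrivial V] (hG : G.Connected) {B : G.Subgraph}
    (hB : IsBlock G B) : 2 ≤ B.verts.ncard := by
  by_contra hlt
  obtain ⟨v, hv⟩ := hB.1
  have hsub : ∀ x ∈ B.verts, x = v := fun x hx =>
    (Set.ncard_le_one_iff).1 (by omega) hx hv
  obtain ⟨u, huv⟩ := exists_ne v
  obtain ⟨w, hw⟩ := (hG.preconnected v u).exists_adj_of_ne huv.symm
  have hle : B ≤ G.subgraphOfAdj hw := by
    refine ⟨fun x hx => by simp [hsub x hx], fun x y hxy => ?_⟩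
    have := (B.adj_sub hxy).ne
    exact absurd ((hsub x (B.edge_vert hxy)).trans (hsub y (B.edge_vert hxy.symm)).symm) this
  obtain ⟨h₁, h₂⟩ := (isNonseparable_iff ⟨v, by simp⟩).1 (isNonseparable_subgraphOfAdj hw)
  have hBeq := hB.2.2.2 _ hle h₁ h₂
  exact hw.ne (hsub w (by rw [hBeq]; simp)).symm

/-- If every two vertices are separated by at most two edges, each block is an edge or a cycle. -/
lemma IsBlock.card_eq_two_or_isCycleGraph [Nontrivial V] (hG : G.Connected)
    (hcut : ∀ u v : V, u ≠ v → ∃ F, CutsBetween G u v F ∧ F.card ≤ 2) {B : G.Subgraph}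
    (hB : IsBlock G B) : Nat.card B.verts = 2 ∨ IsCycleGraph B.coe := by
  refine or_iff_not_imp_left.2 fun h2 => ⟨hB.2.1, fun v => ?_⟩
  have h3 : 2 < B.verts.ncard := lt_of_le_of_ne (hB.two_le_card_verts hG) (Ne.symm h2)
  rw [card_coe_neighborSet]
  refine le_antisymm (not_lt.1 fun hlt => ?_) (hB.isNonseparable.one_lt_ncard_neighborSet h3 v.2)
  obtain ⟨m, hmv, hm⟩ := hB.isNonseparable.exists_three_le_card_of_cutsBetween hlt
  obtain ⟨F, hF, hF2⟩ := hcut v m hmv.symm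
  have := hm F hF
  omega

lemma exists_isBlock_ge_of_isCycle {u : V} {c : G.Walk u u} (hc : c.IsCycle) :
    ∃ B, IsBlock G B ∧ c.toSubgraph ≤ B :=
  (isNonseparable_toSubgraph_of_isCycle hc).exists_isBlock_ge ⟨u, c.start_mem_verts_toSubgraph⟩

lemma srd_le_one_of_isAcyclic (hG : G.Connected) (h : G.IsAcyclic) : srd G ≤ 1 := by
  classical
  have hT : G.IsTree := ⟨hG, h⟩
  exact Nat.sInf_le ⟨_, fun e he => by simp [he], hT.isSRDColoring (G := G)
    fun _ _ _ _ _ _ h₁ h₂ => absurd h₁ h₂⟩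

lemma exists_isSRDColoring_lt_two (hG : G.Connected)
    (h : ∀ B : G.Subgraph, IsBlock G B → Nat.card B.verts = 2 ∨ IsCycleGraph B.coe) :
    ∃ c : Sym2 V → ℕ, (∀ e ∈ G.edgeSet, c e < 2) ∧ IsSRDColoring G c := by
  classical
  obtain ⟨T, hle, hT⟩ := hG.exists_isTree_le
  refine ⟨_, fun e _ => ?_, hT.isSRDColoring (G := G) ?_⟩
  · by_cases he : e ∈ T.edgeSet <;> simp [he]
  · rintro ⟨a, b⟩ hab x y x' y' hxy hn hxy' hn' hr hr'
    obtain ⟨c, hc, hcab, hcxy, -⟩ := hT.exists_isCycle hle hxy hn hr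
    obtain ⟨d, hd, hdab, -, hdT⟩ := hT.exists_isCycle hle hxy' hn' hr'
    obtain ⟨B, hB, hcdB⟩ := ((isNonseparable_toSubgraph_of_isCycle hc).sup
      (isNonseparable_toSubgraph_of_isCycle hd) (T.ne_of_adj hab) (c.toSubgraph.edge_vert hcab)
      (c.toSubgraph.edge_vert hcab.symm) (d.toSubgraph.edge_vert hdab)
      (d.toSubgraph.edge_vert hdab.symm)).exists_isBlock_ge
        ⟨x, Or.inl c.start_mem_verts_toSubgraph⟩
    have hBc := (h B hB).resolve_left
      (card_verts_ne_two_of_isCycle hc (le_sup_left.trans hcdB))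
    exact (hdT x y (adj_toSubgraph_of_isCycleGraph hd hBc (le_sup_right.trans hcdB)
      (hcdB.2 (Or.inl hcxy)))).resolve_left hn

end Characterization

theorem stmt4 {V : Type*} [Fintype V] (G : SimpleGraph V) (hV : Nontrivial V)
    (hG : G.Connected) :
    srd G = 2 ↔
      (∀ B : G.Subgraph, IsBlock G B → Nat.card B.verts = 2 ∨ IsCycleGraph B.coe) ∧
      (∃ B : G.Subgraph, IsBlock G B ∧ IsCycleGraph B.coe) := by
  constructor
  · intro h
    obtain ⟨c, hc, hsrd⟩ := exists_isSRDColoring_lt_srd (G := G) (by omega)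
    rw [h] at hc
    have hblock : ∀ B : G.Subgraph, IsBlock G B → Nat.card B.verts = 2 ∨ IsCycleGraph B.coe := by
      refine fun B hB => hB.card_eq_two_or_isCycleGraph hG fun u v huv => ?_
      obtain ⟨F, hF, -, hinj⟩ := hsrd u v huv
      exact ⟨F, hF, card_le_of_injOn_lt hF hc hinj⟩
    refine ⟨hblock, ?_⟩
    by_contra hno
    have hacyclic : G.IsAcyclic := by
      intro u w hw
      obtain ⟨B, hB, hle⟩ := exists_isBlock_ge_of_isCycle hw
      exact hno ⟨B, hB, (hblock B hB).resolve_left (card_verts_ne_two_of_isCycle hw hle)⟩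
    have := srd_le_one_of_isAcyclic hG hacyclic
    omega
  · rintro ⟨hblock, B, hB, hcycle⟩
    have hex := exists_isSRDColoring_lt_two hG hblock
    refine le_antisymm (Nat.sInf_le hex) (le_csInf ⟨2, hex⟩ ?_)
    rintro k ⟨c, hck, hsrd⟩
    exact two_le_of_isSRDColoring_of_isCycleGraph hB.isNonseparable hcycle hck hsrd
end

section
/- Let G = K_{n_1,...,n_k} be a complete k-partite graph of order n with k ≥ 2 and n_1 ≤ n_2 ≤ ... ≤ n_k. Then srd(G) = n − n_2 if n_1 = 1, and srd(G) = n − n_1 if n_1 ≥ 2. -/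
open SimpleGraph

/-- In a finite graph of maximum degree two, no component contains three vertices of degree
at most one. -/
theorem not_reachable_of_three_ends {V : Type*} [Finite V] {G : SimpleGraph V}
    (hdeg : ∀ x, (G.neighborSet x).ncard ≤ 2) {u v w : V} (huv : u ≠ v) (huw : u ≠ w)
    (hvw : v ≠ w) (hu : (G.neighborSet u).ncard ≤ 1) (hv : (G.neighborSet v).ncard ≤ 1)
    (hw : (G.neighborSet w).ncard ≤ 1) (hruv : G.Reachable u v) : ¬ G.Reachable u w := by
  classical
  intro hruw
  have := Fintype.ofFinite V
  set C := G.connectedComponentMk u with hC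
  have hmu : u ∈ C := ConnectedComponent.mem_supp_iff C u |>.2 rfl
  have hmv : v ∈ C := ConnectedComponent.mem_supp_iff C v |>.2 (ConnectedComponent.sound hruv.symm)
  have hmw : w ∈ C := ConnectedComponent.mem_supp_iff C w |>.2 (ConnectedComponent.sound hruw.symm)
  have hcard := C.connected_toSimpleGraph.card_vert_le_card_edgeSet_add_one
  have hsum := C.toSimpleGraph.sum_degrees_eq_twice_card_edges
  rw [Nat.card_eq_fintype_card, Nat.card_eq_fintype_card, ← edgeFinset_card] at hcard
  have hle : ∀ x : C, C.toSimpleGraph.degree x ≤ (G.neighborSet x).ncard := by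
    intro x
    rw [← card_neighborSet_eq_degree, ← Nat.card_eq_fintype_card, Nat.card_coe_set_eq]
    refine Set.ncard_le_ncard_of_injOn Subtype.val (fun y hy => ?_)
      Subtype.val_injective.injOn (Set.toFinite _)
    exact C.toSimpleGraph_hom.map_adj hy
  have hle' : ∀ x : C, C.toSimpleGraph.degree x +
      (if x ∈ ({⟨u, hmu⟩, ⟨v, hmv⟩, ⟨w, hmw⟩} : Finset C) then 1 else 0) ≤ 2 := by
    intro x
    have h1 := hle x
    have h2 := hdeg x
    split_ifs with h
    · simp only [Finset.mem_insert, Finset.mem_singleton] at h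
      rcases h with rfl | rfl | rfl <;> simp only at h1 <;> omega
    · omega
  have htot := Finset.sum_le_sum (fun x (_ : x ∈ (Finset.univ : Finset C)) => hle' x)
  rw [Finset.sum_add_distrib, hsum, Finset.sum_ite_mem, Finset.univ_inter, Finset.sum_const,
    Finset.card_eq_three.2 ⟨_, _, _, by simpa using huv, by simpa using huw,
      by simpa using hvw, rfl⟩] at htot
  simp only [Finset.sum_const, Finset.card_univ, smul_eq_mul] at htot
  omega

/-- A partial edge-coloring `c` is proper: edges sharing a vertex get distinct colors. -/
def ProperPartial {V κ : Type*} (c : Sym2 V → Option κ) : Prop :=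
  ∀ x y z a, c s(x, y) = some a → c s(x, z) = some a → y = z

/-- The color `a` is missing at the vertex `x` under `c`. -/
def Misses {V κ : Type*} (c : Sym2 V → Option κ) (x : V) (a : κ) : Prop :=
  ∀ y, c s(x, y) ≠ some a

section Coloring

variable {V κ : Type*} {c : Sym2 V → Option κ}

/-- The subgraph of edges colored `a` or `b`. -/
def twoColorGraph (c : Sym2 V → Option κ) (a b : κ) : SimpleGraph V where
  Adj x y := x ≠ y ∧ (c s(x, y) = some a ∨ c s(x, y) = some b)
  symm := ⟨fun x y h => by rw [Sym2.eq_swap]; exact ⟨h.1.symm, h.2⟩⟩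
  loopless := ⟨fun x h => h.1 rfl⟩

theorem ProperPartial.ncard_color_le_one [Finite V] (hc : ProperPartial c) (x : V) (a : κ) :
    {y | c s(x, y) = some a}.ncard ≤ 1 :=
  Set.ncard_le_one_iff_subsingleton.2 fun y hy z hz => hc x y z a hy hz

theorem Misses.ncard_color_eq_zero {x : V} {a : κ} (h : Misses c x a) :
    {y | c s(x, y) = some a}.ncard = 0 := by
  rw [Set.eq_empty_of_forall_notMem (s := {y | c s(x, y) = some a}) (fun y hy => h y hy),
    Set.ncard_empty]

theorem ncard_neighborSet_twoColorGraph_le [Finite V] (x : V) (a b : κ) :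
    ((twoColorGraph c a b).neighborSet x).ncard ≤
      {y | c s(x, y) = some a}.ncard + {y | c s(x, y) = some b}.ncard :=
  (Set.ncard_le_ncard (fun _ hy => hy.2) (Set.toFinite _)).trans (Set.ncard_union_le _ _)

open Classical in
/-- Exchange the colors `a` and `b` on all edges meeting `S`. -/
noncomputable def kempeSwap (c : Sym2 V → Option κ) (a b : κ) (S : Set V) (e : Sym2 V) :
    Option κ :=
  if ∃ x ∈ e, x ∈ S then (c e).map (Equiv.swap a b) else c e

open Classical in
theorem kempeSwap_of_mem {a b : κ} {S : Set V} {x : V} (hx : x ∈ S) (y : V) :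
    kempeSwap c a b S s(x, y) = (c s(x, y)).map (Equiv.swap a b) := by
  rw [kempeSwap, if_pos ⟨x, Sym2.mem_mk_left x y, hx⟩]

theorem kempeSwap_of_notMem {a b : κ} {S : Set V}
    (hS : ∀ x y, x ∈ S → c s(x, y) = some a ∨ c s(x, y) = some b → y ∈ S)
    {x : V} (hx : x ∉ S) (y : V) :
    kempeSwap c a b S s(x, y) = c s(x, y) := by
  classical
  rw [kempeSwap]
  split_ifs with h
  · have hy : y ∈ S := by simpa [hx] using h
    have hne : ¬ (c s(x, y) = some a ∨ c s(x, y) = some b) := fun h' =>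
      hx (hS y x hy (by rwa [Sym2.eq_swap]))
    cases hcol : c s(x, y) with
    | none => rfl
    | some d =>
      rw [hcol] at hne
      have hda : d ≠ a := fun h => hne (.inl (congrArg some h))
      have hdb : d ≠ b := fun h => hne (.inr (congrArg some h))
      simp [Equiv.swap_apply_of_ne_of_ne hda hdb]
  · rfl

open Classical in
theorem ProperPartial.kempeSwap {a b : κ} {S : Set V} (hc : ProperPartial c)
    (hS : ∀ x y, x ∈ S → c s(x, y) = some a ∨ c s(x, y) = some b → y ∈ S) :
    ProperPartial (kempeSwap c a b S) := by
  intro x y z d hy hz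
  by_cases hx : x ∈ S
  · rw [kempeSwap_of_mem hx, Option.map_eq_some_iff] at hy hz
    obtain ⟨d₁, hy, rfl⟩ := hy
    obtain ⟨d₂, hz, h⟩ := hz
    obtain rfl := (Equiv.swap a b).injective h
    exact hc x y z _ hy hz
  · rw [kempeSwap_of_notMem hS hx] at hy hz
    exact hc x y z d hy hz

open Classical in
theorem Misses.kempeSwap_of_mem {a b : κ} {S : Set V} {x : V} (hx : x ∈ S) {d : κ}
    (h : Misses c x d) : Misses (kempeSwap c a b S) x (Equiv.swap a b d) := by
  intro y hy
  rw [_root_.kempeSwap_of_mem hx, Option.map_eq_some_iff] at hy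
  obtain ⟨d', hy, hd⟩ := hy
  exact h y ((Equiv.swap a b).injective hd ▸ hy)

theorem Misses.kempeSwap_of_notMem {a b : κ} {S : Set V}
    (hS : ∀ x y, x ∈ S → c s(x, y) = some a ∨ c s(x, y) = some b → y ∈ S)
    {x : V} (hx : x ∉ S) {d : κ} (h : Misses c x d) : Misses (kempeSwap c a b S) x d := by
  intro y hy
  rw [_root_.kempeSwap_of_notMem hS hx] at hy
  exact h y hy

theorem Misses.kempeSwap_of_ne {a b : κ} {S : Set V}
    (hS : ∀ x y, x ∈ S → c s(x, y) = some a ∨ c s(x, y) = some b → y ∈ S)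
    {x : V} {d : κ} (hda : d ≠ a) (hdb : d ≠ b) (h : Misses c x d) :
    Misses (kempeSwap c a b S) x d := by
  classical
  by_cases hx : x ∈ S
  · simpa [Equiv.swap_apply_of_ne_of_ne hda hdb] using h.kempeSwap_of_mem (a := a) (b := b) hx
  · exact h.kempeSwap_of_notMem hS hx

theorem kempeSwap_ne_none {a b : κ} {S : Set V} {e : Sym2 V} (h : c e ≠ none) :
    kempeSwap c a b S e ≠ none := by
  classical
  rw [kempeSwap]
  split_ifs <;> simpa using h

/-- The component of `x` in `twoColorGraph c a b` is closed under edges colored `a` or `b`. -/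
theorem twoColorGraph_reachable_closed (a b : κ) (r : V) (x y : V)
    (hx : x ∈ {x | (twoColorGraph c a b).Reachable r x})
    (h : c s(x, y) = some a ∨ c s(x, y) = some b) :
    y ∈ {x | (twoColorGraph c a b).Reachable r x} := by
  by_cases hxy : x = y
  · exact hxy ▸ hx
  · exact Reachable.trans hx (SimpleGraph.Adj.reachable (G := twoColorGraph c a b) ⟨hxy, h⟩)

/-- Some proper partial coloring colors all edges in `E`. -/
def ProperlyColorable (κ : Type*) (E : Set (Sym2 V)) : Prop :=
  ∃ c : Sym2 V → Option κ, ProperPartial c ∧ ∀ e ∈ E, c e ≠ none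

/-- `l` is a fan at `v`: the color of each spoke but the first is missing at the preceding
vertex of `l`. -/
def IsFan (c : Sym2 V → Option κ) (v : V) (l : List V) : Prop :=
  l.Nodup ∧ v ∉ l ∧ l.IsChain fun w w' => ∃ a, c s(v, w') = some a ∧ Misses c w a

open Classical in
theorem ProperlyColorable.of_common_missing {E : Set (Sym2 V)} {v w : V} {a : κ}
    (hc : ProperPartial c) (hE : ∀ e ∈ E, e ≠ s(v, w) → c e ≠ none)
    (hv : Misses c v a) (hw : Misses c w a) : ProperlyColorable κ E := by
  refine ⟨fun e => if e = s(v, w) then some a else c e, ?_, ?_⟩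
  · intro x y z d hy hz
    have hv' := hv
    have hw' := hw
    unfold Misses at hv' hw'
    have := hc x y z d
    simp only [Sym2.eq_iff] at hy hz
    grind
  · intro e he
    by_cases h : e = s(v, w)
    · simp [h]
    · simpa [h] using hE e he h

open Classical in
/-- Shift the color `b` of the second spoke of a fan to the first one. -/
noncomputable def shiftSpoke (c : Sym2 V → Option κ) (v w w' : V) (b : κ) (e : Sym2 V) :
    Option κ :=
  if e = s(v, w) then some b else if e = s(v, w') then none else c e

theorem ProperPartial.shiftSpoke {v w w' : V} {b : κ} (hc : ProperPartial c)
    (hb : c s(v, w') = some b) (hw : Misses c w b) :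
    ProperPartial (shiftSpoke c v w w' b) := by
  intro x y z d hy hz
  have h1 := hc x y z d
  have h2 := fun y => hc v w' y b hb
  unfold Misses at hw
  simp only [_root_.shiftSpoke, Sym2.eq_iff] at hy hz
  grind [Sym2.eq_swap]

theorem shiftSpoke_ne_none {E : Set (Sym2 V)} {v w w' : V} {b : κ}
    (hE : ∀ e ∈ E, e ≠ s(v, w) → c e ≠ none) :
    ∀ e ∈ E, e ≠ s(v, w') → shiftSpoke c v w w' b e ≠ none := by
  intro e he hne
  have := hE e he
  simp only [shiftSpoke]
  grind

theorem shiftSpoke_spoke {v w w' y : V} {b : κ} (hyw : y ≠ w) (hyw' : y ≠ w') :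
    shiftSpoke c v w w' b s(v, y) = c s(v, y) := by
  rw [shiftSpoke, if_neg (mt Sym2.congr_right.1 hyw), if_neg (mt Sym2.congr_right.1 hyw')]

theorem Misses.shiftSpoke_center {v w w' : V} {a b : κ} (hb : c s(v, w') = some b)
    (h : Misses c v a) : Misses (shiftSpoke c v w w' b) v a := by
  intro y hy
  have h1 := h y
  have h2 := h w'
  simp only [shiftSpoke] at hy
  grind

theorem Misses.shiftSpoke_of_ne {v w w' x : V} {a b : κ} (hxv : x ≠ v) (hxw : x ≠ w)
    (h : Misses c x a) : Misses (shiftSpoke c v w w' b) x a := by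
  intro y hy
  have h1 := h y
  simp only [shiftSpoke, Sym2.eq_iff] at hy
  grind

theorem IsFan.shiftSpoke {v w w' : V} {l : List V} {b : κ}
    (h : IsFan c v (w :: w' :: l)) : IsFan (shiftSpoke c v w w' b) v (w' :: l) := by
  obtain ⟨hnd, hv, hch⟩ := h
  refine ⟨hnd.of_cons, fun h => hv (List.mem_cons_of_mem _ h), ?_⟩
  refine (List.isChain_cons_cons.1 hch).2.imp_of_mem_tail_imp ?_
  rintro x y hx hy ⟨a, hya, hxa⟩
  simp only [List.tail_cons] at hy
  have hyw : y ≠ w := by grind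
  have hyw' : y ≠ w' := by grind
  have hxv : x ≠ v := by grind
  have hxw : x ≠ w := by grind
  exact ⟨a, by rwa [shiftSpoke_spoke hyw hyw'], hxa.shiftSpoke_of_ne hxv hxw⟩

/-- If the last vertex of a fan misses a color missing at the center, the uncolored first spoke
can be colored after shifting. -/
theorem ProperlyColorable.of_fan_last_missing {E : Set (Sym2 V)} {v : V} {a : κ} (l : List V) :
    ∀ {c : Sym2 V → Option κ} (w : V), ProperPartial c →
      (∀ e ∈ E, e ≠ s(v, w) → c e ≠ none) → IsFan c v (w :: l) → Misses c v a →
      Misses c ((w :: l).getLast (List.cons_ne_nil _ _)) a → ProperlyColorable κ E := by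
  induction l with
  | nil =>
    intro c w hc hE _ hv hw
    exact .of_common_missing hc hE hv hw
  | cons w' l ih =>
    intro c w hc hE hfan hv hlast
    obtain ⟨⟨b, hb, hwb⟩, -⟩ := List.isChain_cons_cons.1 hfan.2.2
    refine ih w' (hc.shiftSpoke hb hwb) (shiftSpoke_ne_none hE) hfan.shiftSpoke
      (hv.shiftSpoke_center hb) ?_
    rw [List.getLast_cons (List.cons_ne_nil _ _)] at hlast
    have hmem := List.getLast_mem (List.cons_ne_nil w' l)
    have hnd := hfan.1
    have hv' := hfan.2.1
    exact hlast.shiftSpoke_of_ne (by grind) (by grind)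

/-- If the first and the last vertex of a fan both miss the color of the second spoke, the
uncolored first spoke can be colored after a Kempe exchange. -/
theorem ProperlyColorable.of_fan_kempe [Finite V] {E : Set (Sym2 V)} {v w w' : V} {a b : κ}
    {l : List V} (hc : ProperPartial c) (hE : ∀ e ∈ E, e ≠ s(v, w) → c e ≠ none)
    (hfan : IsFan c v (w :: w' :: l)) (hv : Misses c v a) (hw' : c s(v, w') = some b)
    (hw : Misses c w b)
    (hlast : Misses c ((w' :: l).getLast (List.cons_ne_nil _ _)) b) :
    ProperlyColorable κ E := by
  classical
  obtain ⟨hnd, hvl, hch⟩ := hfan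
  have hmem := List.getLast_mem (List.cons_ne_nil w' l)
  set z := (w' :: l).getLast (List.cons_ne_nil _ _) with hz
  have hvw : v ≠ w := by grind
  have hvz : v ≠ z := by grind
  have hwz : w ≠ z := by grind
  have hdeg : ∀ x, ((twoColorGraph c a b).neighborSet x).ncard ≤ 2 := fun x =>
    (ncard_neighborSet_twoColorGraph_le x a b).trans
      (Nat.add_le_add (hc.ncard_color_le_one x a) (hc.ncard_color_le_one x b))
  have hend : ∀ x, Misses c x a ∨ Misses c x b →
      ((twoColorGraph c a b).neighborSet x).ncard ≤ 1 := by
    intro x hx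
    have h1 := ncard_neighborSet_twoColorGraph_le (c := c) x a b
    have h2 := hc.ncard_color_le_one x a
    have h3 := hc.ncard_color_le_one x b
    rcases hx with hx | hx <;> have h4 := hx.ncard_color_eq_zero <;> omega
  by_cases hr : (twoColorGraph c a b).Reachable w v
  · have hr' : ¬ (twoColorGraph c a b).Reachable z v := fun h =>
      not_reachable_of_three_ends hdeg hvw hvz hwz (hend v (.inl hv)) (hend w (.inr hw))
        (hend z (.inr hlast)) hr.symm h.symm
    have hzw : ¬ (twoColorGraph c a b).Reachable z w := fun h => hr' (h.trans hr)
    have hS := twoColorGraph_reachable_closed (c := c) a b z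
    set S := {x | (twoColorGraph c a b).Reachable z x} with hSdef
    have hzS : z ∈ S := Reachable.refl z
    refine of_fan_last_missing (a := a) (w' :: l) w (hc.kempeSwap hS)
      (fun e he hne => kempeSwap_ne_none (hE e he hne)) ⟨hnd, hvl, ?_⟩
      (hv.kempeSwap_of_notMem hS hr') ?_
    · rw [List.isChain_cons_cons] at hch ⊢
      refine ⟨⟨b, by rwa [kempeSwap_of_notMem hS hr'], hw.kempeSwap_of_notMem hS hzw⟩, ?_⟩
      refine hch.2.imp_of_mem_tail_imp ?_
      rintro x y hx hy ⟨d, hyd, hxd⟩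
      simp only [List.tail_cons] at hy
      have hda : d ≠ a := fun h => hv y (h ▸ hyd)
      have hdb : d ≠ b := fun h => by
        have := hc v y w' b (h ▸ hyd) hw'
        grind
      exact ⟨d, by rwa [kempeSwap_of_notMem hS hr'], hxd.kempeSwap_of_ne hS hda hdb⟩
    · rw [List.getLast_cons (List.cons_ne_nil _ _), ← hz]
      simpa using hlast.kempeSwap_of_mem (a := a) (b := b) hzS
  · have hS := twoColorGraph_reachable_closed (c := c) a b w
    set S := {x | (twoColorGraph c a b).Reachable w x} with hSdef
    have hwS : w ∈ S := Reachable.refl w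
    refine .of_common_missing (a := a) (hc.kempeSwap hS)
      (fun e he hne => kempeSwap_ne_none (hE e he hne)) (hv.kempeSwap_of_notMem hS hr) ?_
    simpa using hw.kempeSwap_of_mem (a := a) (b := b) hwS

/-- If the last vertex of a fan misses the color of some spoke of the fan, the uncolored first
spoke can be colored. -/
theorem ProperlyColorable.of_fan_repeat [Finite V] {E : Set (Sym2 V)} {v : V} {a b : κ}
    (l : List V) :
    ∀ {c : Sym2 V → Option κ} (w : V), ProperPartial c →
      (∀ e ∈ E, e ≠ s(v, w) → c e ≠ none) → IsFan c v (w :: l) → Misses c v a →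
      (∃ y ∈ l, c s(v, y) = some b) →
      Misses c ((w :: l).getLast (List.cons_ne_nil _ _)) b → ProperlyColorable κ E := by
  induction l with
  | nil => simp
  | cons w' l ih =>
    intro c w hc hE hfan hv hy hlast
    obtain ⟨⟨d, hd, hwd⟩, -⟩ := List.isChain_cons_cons.1 hfan.2.2
    rw [List.getLast_cons (List.cons_ne_nil _ _)] at hlast
    by_cases hdb : d = b
    · subst hdb
      exact .of_fan_kempe hc hE hfan hv hd hwd hlast
    · have hmem := List.getLast_mem (List.cons_ne_nil w' l)
      have hnd := hfan.1
      have hv' := hfan.2.1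
      refine ih w' (hc.shiftSpoke hd hwd) (shiftSpoke_ne_none hE) hfan.shiftSpoke
        (hv.shiftSpoke_center hd) ?_ (hlast.shiftSpoke_of_ne (by grind) (by grind))
      obtain ⟨y, hyl, hyb⟩ := hy
      have hyw' : y ≠ w' := by grind
      exact ⟨y, by grind, by rwa [shiftSpoke_spoke (by grind) hyw']⟩

/-- Every fan at `v` can be completed to color its uncolored first spoke, provided `v` and all
ends of colored spokes miss some color. -/
theorem ProperlyColorable.of_fan [Fintype V] {E : Set (Sym2 V)} {v w : V} {a : κ}
    (hc : ProperPartial c) (hE : ∀ e ∈ E, e ≠ s(v, w) → c e ≠ none)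
    (hw0 : c s(v, w) = none) (hloop : c s(v, v) = none) (hv : Misses c v a)
    (hmiss : ∀ y, y = w ∨ c s(v, y) ≠ none → ∃ b, Misses c y b) (m : ℕ) :
    ∀ l : List V, IsFan c v (w :: l) → Fintype.card V ≤ l.length + m →
      ProperlyColorable κ E := by
  induction m with
  | zero =>
    intro l hfan hcard
    have := hfan.1.length_le_card
    simp only [List.length_cons] at this
    omega
  | succ m ih =>
    intro l hfan hcard
    have hlastmem : ∀ y ∈ w :: l, y = w ∨ c s(v, y) ≠ none := by
      intro y hy
      rcases List.mem_cons.1 hy with rfl | hy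
      · exact .inl rfl
      · right
        obtain ⟨l₁, l₂, rfl⟩ := List.append_of_mem hy
        have hch := hfan.2.2
        rw [← List.cons_append, List.isChain_append] at hch
        obtain ⟨d, hd, -⟩ := hch.2.2 _ (List.getLast?_eq_some_getLast (List.cons_ne_nil _ _)) y
          (by simp)
        simp [hd]
    obtain ⟨b, hb⟩ := hmiss _ (hlastmem _ (List.getLast_mem (List.cons_ne_nil w l)))
    by_cases hvb : Misses c v b
    · exact .of_fan_last_missing l w hc hE hfan hvb hb
    · simp only [Misses, not_forall, not_not] at hvb
      obtain ⟨y, hy⟩ := hvb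
      by_cases hyl : y ∈ l
      · exact .of_fan_repeat l w hc hE hfan hv ⟨y, hyl, hy⟩ hb
      · refine ih (l ++ [y]) ⟨?_, ?_, ?_⟩ (by simp; omega)
        · have := hfan.1
          grind
        · have := hfan.2.1
          grind
        · rw [← List.cons_append, List.isChain_append]
          refine ⟨hfan.2.2, List.isChain_singleton _, ?_⟩
          intro x hx y' hy'
          rw [List.getLast?_eq_some_getLast (List.cons_ne_nil _ _), Option.mem_some_iff] at hx
          simp only [List.head?_cons, Option.mem_some_iff] at hy'
          subst hx hy'
          exact ⟨b, hy, hb⟩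

end Coloring

theorem exists_misses {V : Type*} [Finite V] {H : SimpleGraph V} {D : ℕ}
    {c : Sym2 V → Option (Fin D)} (hc : ∀ e, c e ≠ none → e ∈ H.edgeSet) {x : V}
    (hx : (H.neighborSet x).ncard < D) : ∃ a, Misses c x a := by
  by_contra! h
  simp only [Misses, not_forall, not_not] at h
  choose f hf using h
  have hinj : Function.Injective f := fun a b hab =>
    Option.some.inj ((hf a).symm.trans (hab ▸ hf b))
  have hmem : Set.range f ⊆ H.neighborSet x := by
    rintro _ ⟨a, rfl⟩
    exact hc s(x, f a) (by simp [hf a])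
  have := Set.ncard_le_ncard hmem (Set.toFinite _)
  rw [← Set.image_univ, Set.ncard_image_of_injective _ hinj, Set.ncard_univ,
    Nat.card_eq_fintype_card, Fintype.card_fin] at this
  omega

/-- **Vizing's theorem**, in the form: a graph of maximum degree at most `D` whose vertices of
degree `D` are pairwise nonadjacent has a proper edge-coloring with `D` colors. -/
theorem exists_proper_edge_coloring {V : Type*} [Fintype V] (D : ℕ) (m : ℕ) :
    ∀ H : SimpleGraph V, H.edgeSet.ncard ≤ m → (∀ x, (H.neighborSet x).ncard ≤ D) →
      (∀ x y, H.Adj x y → (H.neighborSet x).ncard < D ∨ (H.neighborSet y).ncard < D) →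
      ∃ c : Sym2 V → Option (Fin D), ProperPartial c ∧ ∀ e, c e ≠ none ↔ e ∈ H.edgeSet := by
  classical
  induction m with
  | zero =>
    intro H hm _ _
    have : H.edgeSet = ∅ := (Set.ncard_eq_zero (Set.toFinite _)).1 (Nat.le_zero.1 hm)
    exact ⟨fun _ => none, by simp [ProperPartial], by simp [this]⟩
  | succ m ih =>
    intro H hm hD hind
    by_cases hbot : H = ⊥
    · exact ih H (by simp [hbot]) hD hind
    obtain ⟨v, w, hvw, hnb⟩ :
        ∃ v w, H.Adj v w ∧ ∀ y, H.Adj v y → (H.neighborSet y).ncard < D := by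
      by_cases hmax : ∃ v w, H.Adj v w ∧ ¬ (H.neighborSet v).ncard < D
      · obtain ⟨v, w, hvw, hv⟩ := hmax
        exact ⟨v, w, hvw, fun y hy => (hind v y hy).resolve_left hv⟩
      · push Not at hmax
        obtain ⟨v, w, hvw⟩ := SimpleGraph.ne_bot_iff_exists_adj.1 hbot
        exact ⟨v, w, hvw, fun y hy => hmax y v hy.symm⟩
    set H' := H.deleteEdges {s(v, w)} with hH'
    have hle : H' ≤ H := deleteEdges_le _
    have hmono : ∀ x, (H'.neighborSet x).ncard ≤ (H.neighborSet x).ncard := fun x =>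
      Set.ncard_le_ncard (fun y hy => hle hy) (Set.toFinite _)
    have hlt : (H'.neighborSet v).ncard < (H.neighborSet v).ncard :=
      Set.ncard_lt_ncard ⟨fun y hy => hle hy, fun h => by
        have : H'.Adj v w := h hvw
        simp [hH'] at this⟩ (Set.toFinite _)
    have hcard : H'.edgeSet.ncard < H.edgeSet.ncard :=
      Set.ncard_lt_ncard ⟨edgeSet_mono hle, fun h => by
        have : s(v, w) ∈ H'.edgeSet := h hvw
        simp [hH'] at this⟩ (Set.toFinite _)
    obtain ⟨c, hc, hcH⟩ := ih H' (by omega) (fun x => (hmono x).trans (hD x))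
      (fun x y hxy => (hind x y (hle hxy)).imp (hmono x).trans_lt (hmono y).trans_lt)
    have hnone : ∀ e, e ∉ H'.edgeSet → c e = none := fun e he =>
      not_not.1 fun h => he ((hcH e).1 h)
    obtain ⟨a, ha⟩ := exists_misses (fun e => (hcH e).1) (hlt.trans_le (hD v))
    obtain ⟨c', hc', hE⟩ := ProperlyColorable.of_fan (E := H.edgeSet) (v := v) (w := w) hc
      (fun e he hne => (hcH e).2 (by simp [hH', he, hne]))
      (hnone _ (by simp [hH'])) (hnone _ (by simp)) ha
      (fun y hy => exists_misses (fun e => (hcH e).1) ((hmono y).trans_lt (hnb y (by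
        rcases hy with rfl | hy
        · exact hvw
        · exact hle ((hcH _).1 hy)))))
      (Fintype.card V) [] ⟨List.nodup_singleton _, by simpa using hvw.ne,
        List.isChain_singleton _⟩ (by simp)
    refine ⟨fun e => if e ∈ H.edgeSet then c' e else none, ?_, ?_⟩
    · intro x y z d hy hz
      have := hc' x y z d
      grind
    · intro e
      have := hE e
      grind

section Cuts

variable {V : Type*} {G : SimpleGraph V}

theorem CutsBetween.symm {u v : V} {F : Finset (Sym2 V)} (h : CutsBetween G u v F) :
    CutsBetween G v u F :=
  ⟨h.1, fun hr => h.2 hr.symm⟩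

theorem lam_comm (G : SimpleGraph V) (u v : V) : lam G u v = lam G v u := by
  unfold lam
  congr 1
  ext m
  exact ⟨fun ⟨F, hF, hm⟩ => ⟨F, hF.symm, hm⟩, fun ⟨F, hF, hm⟩ => ⟨F, hF.symm, hm⟩⟩

theorem ncard_incidenceSet [Finite V] (u : V) :
    (G.incidenceSet u).ncard = (G.neighborSet u).ncard := by
  classical
  exact Nat.card_congr (G.incidenceSetEquivNeighborSet u)

/-- The edges at `u` separate `u` from every other vertex. -/
theorem cutsBetween_incidenceSet [Finite V] {u v : V} (huv : u ≠ v) :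
    CutsBetween G u v (G.incidenceSet u).toFinite.toFinset := by
  refine ⟨by simpa using G.incidenceSet_subset u, ?_⟩
  rintro ⟨p⟩
  cases p with
  | nil => exact huv rfl
  | cons h p =>
    rw [deleteEdges_adj] at h
    exact h.2 (by simpa [mk'_mem_incidenceSet_left_iff] using h.1)

theorem exists_cutsBetween_card_eq_lam [Finite V] {u v : V} (huv : u ≠ v) :
    ∃ F, CutsBetween G u v F ∧ F.card = lam G u v :=
  Nat.sInf_mem (s := {n | ∃ F : Finset (Sym2 V), CutsBetween G u v F ∧ F.card = n})
    ⟨_, _, cutsBetween_incidenceSet huv, rfl⟩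

end Cuts

section Multipartite

variable {k : ℕ} {n : Fin k → ℕ}

/-- The complete multipartite graph with parts of sizes `n i`. -/
abbrev multipartite (n : Fin k → ℕ) : SimpleGraph (Σ i, Fin (n i)) :=
  completeMultipartiteGraph fun i => Fin (n i)

theorem ncard_part (i : Fin k) : {y : Σ i, Fin (n i) | y.1 = i}.ncard = n i := by
  have : {y : Σ i, Fin (n i) | y.1 = i} = Set.range (Sigma.mk i) := by
    ext ⟨j, y⟩
    constructor
    · rintro rfl
      exact ⟨y, rfl⟩
    · rintro ⟨z, hz⟩
      exact (congrArg Sigma.fst hz).symm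
  rw [this, ← Set.image_univ, Set.ncard_image_of_injective _ sigma_mk_injective, Set.ncard_univ,
    Nat.card_eq_fintype_card, Fintype.card_fin]

theorem ncard_neighborSet_add (u : Σ i, Fin (n i)) :
    ((multipartite n).neighborSet u).ncard + n u.1 = ∑ i, n i := by
  have hcompl : ((multipartite n).neighborSet u)ᶜ = {y | y.1 = u.1} := by
    ext y
    simp [eq_comm]
  rw [← ncard_part (n := n) u.1, ← hcompl, Set.ncard_add_ncard_compl, Nat.card_eq_fintype_card,
    Fintype.card_sigma]
  simp

/-- If the part of `v` is not larger than that of `u`, then the part of `v` without `v` injects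
into the part of `u` without `u`. -/
theorem exists_injOn_part {u v : Σ i, Fin (n i)} (huv : n v.1 ≤ n u.1) :
    ∃ f : (Σ i, Fin (n i)) → Σ i, Fin (n i),
      (∀ w, w.1 = v.1 → w ≠ v → (f w).1 = u.1 ∧ f w ≠ u) ∧
      ∀ w w', w.1 = v.1 → w ≠ v → w'.1 = v.1 → w' ≠ v → f w = f w' → w = w' := by
  have : Nonempty (Σ i, Fin (n i)) := ⟨u⟩
  have hle : ({y : Σ i, Fin (n i) | y.1 = v.1} \ {v}).encard ≤
      ({y : Σ i, Fin (n i) | y.1 = u.1} \ {u}).encard := by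
    rw [← (Set.toFinite _).cast_ncard_eq, ← (Set.toFinite _).cast_ncard_eq, Nat.cast_le,
      Set.ncard_sdiff_singleton_of_mem (by simp), Set.ncard_sdiff_singleton_of_mem (by simp),
      ncard_part, ncard_part]
    omega
  obtain ⟨f, hf, hinj⟩ := (Set.toFinite _).exists_injOn_of_encard_le hle
  exact ⟨f, fun w hw hwv => hf ⟨hw, hwv⟩,
    fun w w' hw hwv hw' hwv' h => hinj ⟨hw, hwv⟩ ⟨hw', hwv'⟩ h⟩

/-- Every cut separating `u` and `v` has at least as many edges as the smaller degree. -/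
theorem CutsBetween.ncard_neighborSet_le {u v : Σ i, Fin (n i)} (huv : n v.1 ≤ n u.1)
    {F : Finset (Sym2 (Σ i, Fin (n i)))} (hF : CutsBetween (multipartite n) u v F) :
    ((multipartite n).neighborSet u).ncard ≤ F.card := by
  classical
  obtain ⟨f, hf, hinj⟩ := exists_injOn_part huv
  obtain ⟨S, huS, hvS, hcross⟩ : ∃ S : Set (Σ i, Fin (n i)), u ∈ S ∧ v ∉ S ∧
      ∀ x y, x ∈ S → y ∉ S → x.1 ≠ y.1 → s(x, y) ∈ F := by
    refine ⟨{x | ((multipartite n).deleteEdges (F : Set (Sym2 (Σ i, Fin (n i))))).Reachable u x},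
      Reachable.refl u, hF.2, fun x y hx hy hxy => ?_⟩
    by_contra hxF
    refine hy (Reachable.trans hx (SimpleGraph.Adj.reachable ?_))
    rw [deleteEdges_adj]
    exact ⟨hxy, hxF⟩
  let g : (Σ i, Fin (n i)) → (Σ i, Fin (n i)) × (Σ i, Fin (n i)) := fun w =>
    if w ∉ S then (u, w) else if w.1 ≠ v.1 then (w, v)
    else if f w ∈ S then (f w, v) else (w, f w)
  have hg : ∀ w, u.1 ≠ w.1 → (g w).1 ∈ S ∧ (g w).2 ∉ S ∧ (g w).1.1 ≠ (g w).2.1 := by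
    intro w hw
    have hfw := hf w
    have hwv : w ∈ S → w ≠ v := fun h h' => hvS (h' ▸ h)
    clear hf hinj hcross
    simp only [g]
    split_ifs <;> grind
  have hginj : ∀ w w', u.1 ≠ w.1 → u.1 ≠ w'.1 → g w = g w' → w = w' := by
    intro w w' hw hw' h
    have h1 := hf w
    have h2 := hf w'
    have h3 := hinj w w'
    have hwv : w ∈ S → w ≠ v := fun h h' => hvS (h' ▸ h)
    have hwv' : w' ∈ S → w' ≠ v := fun h h' => hvS (h' ▸ h)
    clear hf hinj hcross hg
    simp only [g] at h
    split_ifs at h <;> simp only [Prod.mk.injEq] at h <;> grind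
  rw [← Set.ncard_coe_finset]
  refine Set.ncard_le_ncard_of_injOn (fun w => s((g w).1, (g w).2)) ?_ ?_ (Set.toFinite _)
  · intro w hw
    obtain ⟨h1, h2, h3⟩ := hg w hw
    exact hcross _ _ h1 h2 h3
  · intro w hw w' hw' h
    obtain ⟨h1, h2, -⟩ := hg w hw
    obtain ⟨h1', h2', -⟩ := hg w' hw'
    refine hginj w w' hw hw' ?_
    rcases Sym2.eq_iff.1 h with h | h
    · exact Prod.ext h.1 h.2
    · exact absurd (h.1 ▸ h1) h2'

theorem ncard_neighborSet_eq_lam {u v : Σ i, Fin (n i)} (hne : u ≠ v) (huv : n v.1 ≤ n u.1) :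
    ((multipartite n).neighborSet u).ncard = lam (multipartite n) u v := by
  refine le_antisymm ?_ (Nat.sInf_le ⟨_, cutsBetween_incidenceSet hne, ?_⟩)
  · obtain ⟨F, hF, hcard⟩ := exists_cutsBetween_card_eq_lam (G := (multipartite n)) hne
    exact hcard ▸ hF.ncard_neighborSet_le huv
  · rw [← Set.ncard_eq_toFinset_card, ncard_incidenceSet]

/-- A coloring that is injective on the star of every vertex except one of maximum degree is a
strong rainbow disconnection coloring. -/
theorem isSRDColoring_of_injOn_incidenceSet {x : Σ i, Fin (n i)} (hx : ∀ i, n x.1 ≤ n i)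
    {c : Sym2 (Σ i, Fin (n i)) → ℕ} (hc : ∀ w, w ≠ x → Set.InjOn c ((multipartite n).incidenceSet w)) :
    IsSRDColoring (multipartite n) c := by
  have key : ∀ u v, u ≠ v → u ≠ x → n v.1 ≤ n u.1 → ∃ F : Finset _,
      CutsBetween (multipartite n) u v F ∧ F.card = lam (multipartite n) u v ∧ Set.InjOn c ↑F := by
    intro u v huv hux hle
    refine ⟨_, cutsBetween_incidenceSet huv, ?_, by simpa using hc u hux⟩
    rw [← Set.ncard_eq_toFinset_card, ncard_incidenceSet, ncard_neighborSet_eq_lam huv hle]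
  intro u v huv
  by_cases h : u ≠ x ∧ n v.1 ≤ n u.1
  · exact key u v huv h.1 h.2
  · have hv : v ≠ x ∧ n u.1 ≤ n v.1 := by
      by_cases hux : u = x
      · exact ⟨fun h => huv (hux.trans h.symm), hux ▸ hx v.1⟩
      · have hlt : ¬ n v.1 ≤ n u.1 := fun h' => h ⟨hux, h'⟩
        exact ⟨fun h => hlt (h ▸ hx u.1), by omega⟩
    obtain ⟨F, hF, hcard, hinj⟩ := key v u huv.symm hv.1 hv.2
    exact ⟨F, hF.symm, hcard.trans (lam_comm _ _ _), hinj⟩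

/-- If all vertices but `x` have degree at most `D`, some `D`-coloring of the edges is injective
on the star of every vertex but `x`. -/
theorem exists_coloring_injOn_incidenceSet {D : ℕ} (x : Σ i, Fin (n i))
    (hD : ∀ w, w ≠ x → ((multipartite n).neighborSet w).ncard ≤ D) :
    ∃ c : Sym2 (Σ i, Fin (n i)) → ℕ, (∀ e ∈ (multipartite n).edgeSet, c e < D) ∧
      ∀ w, w ≠ x → Set.InjOn c ((multipartite n).incidenceSet w) := by
  classical
  set H := (multipartite n).deleteIncidenceSet x with hH
  have hadj : ∀ a b, H.Adj a b ↔ a.1 ≠ b.1 ∧ a ≠ x ∧ b ≠ x := by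
    intro a b
    rw [hH, deleteIncidenceSet_adj]
    rfl
  have hle : ∀ w, (H.neighborSet w).ncard ≤ ((multipartite n).neighborSet w).ncard := fun w =>
    Set.ncard_le_ncard (fun y hy => ((hadj w y).1 hy).1) (Set.toFinite _)
  have hlt : ∀ w, x.1 ≠ w.1 → (H.neighborSet w).ncard < D := by
    intro w hw
    refine (Set.ncard_lt_ncard ⟨fun y hy => ((hadj w y).1 hy).1, fun h => ?_⟩
      (Set.toFinite _)).trans_le (hD w fun h => hw (h ▸ rfl))
    exact ((hadj w x).1 (h (show x ∈ (multipartite n).neighborSet w from hw.symm))).2.2 rfl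
  obtain ⟨c, hc, hcH⟩ := exists_proper_edge_coloring D _ H le_rfl
    (fun w => by
      by_cases hw : w = x
      · have : H.neighborSet w = ∅ :=
          Set.eq_empty_of_forall_notMem fun y hy => ((hadj w y).1 hy).2.1 hw
        simp [this]
      · exact (hle w).trans (hD w hw))
    (fun a b hab => by
      by_cases ha : x.1 = a.1
      · exact .inr (hlt b fun hb => ((hadj a b).1 hab).1 (ha.symm.trans hb))
      · exact .inl (hlt a ha))
  have hmiss : ∀ w, ∃ m : ℕ, x.1 ≠ w.1 → m < D ∧ ∀ y a, c s(w, y) = some a → (a : ℕ) ≠ m := by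
    intro w
    by_cases hw : x.1 = w.1
    · exact ⟨0, fun h => absurd hw h⟩
    · obtain ⟨a, ha⟩ := exists_misses (fun e => (hcH e).1) (hlt w hw)
      exact ⟨a, fun _ => ⟨a.2, fun y b hb hba => ha y (Fin.ext hba ▸ hb)⟩⟩
  choose m hm using hmiss
  let col : Sym2 (Σ i, Fin (n i)) → ℕ := fun e =>
    if h : x ∈ e then m (Sym2.Mem.other h) else ((c e).map Fin.val).getD 0
  have hcolx : ∀ w, col s(w, x) = m w := by
    intro w
    have h : x ∈ s(w, x) := Sym2.mem_mk_right w x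
    have h' := Sym2.other_spec h
    rw [Sym2.eq_swap, Sym2.congr_left] at h'
    simp only [col, dif_pos h, h']
  have hcol : ∀ w y, w.1 ≠ y.1 → w ≠ x → y ≠ x →
      ∃ a, c s(w, y) = some a ∧ col s(w, y) = a := by
    intro w y hwy hw hy
    obtain ⟨a, ha⟩ := Option.ne_none_iff_exists'.1 ((hcH s(w, y)).2 ((hadj w y).2 ⟨hwy, hw, hy⟩))
    refine ⟨a, ha, ?_⟩
    simp [col, hw.symm, hy.symm, ha]
  refine ⟨col, ?_, ?_⟩
  · intro e
    induction e with
    | h w y =>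
    intro he
    have hwy : w.1 ≠ y.1 := he
    by_cases hy : y = x
    · subst hy
      rw [hcolx]
      exact (hm w hwy.symm).1
    · by_cases hw : w = x
      · subst hw
        rw [Sym2.eq_swap, hcolx]
        exact (hm y hwy).1
      · obtain ⟨a, -, ha⟩ := hcol w y hwy hw hy
        exact ha ▸ a.2
  · rintro w hw e he e' he' hee
    obtain ⟨y, rfl⟩ := Sym2.mem_iff_exists.1 he.2
    obtain ⟨z, rfl⟩ := Sym2.mem_iff_exists.1 he'.2
    have hwy : w.1 ≠ y.1 := he.1
    have hwz : w.1 ≠ z.1 := he'.1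
    by_cases hy : y = x <;> by_cases hz : z = x
    · rw [hy, hz]
    · subst hy
      obtain ⟨a, hca, ha⟩ := hcol w z hwz hw hz
      rw [hcolx, ha] at hee
      exact absurd hee.symm ((hm w hwy.symm).2 z a hca)
    · subst hz
      obtain ⟨a, hca, ha⟩ := hcol w y hwy hw hy
      rw [hcolx, ha] at hee
      exact absurd hee ((hm w hwz.symm).2 y a hca)
    · obtain ⟨a, hca, ha⟩ := hcol w y hwy hw hy
      obtain ⟨b, hcb, hb⟩ := hcol w z hwz hw hz
      have hab : a = b := Fin.ext (by rw [← ha, ← hb, hee])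
      rw [hc w y z a hca (hab ▸ hcb)]

/-- `srd` equals `D` when `D` is the smaller of the degrees of two distinct vertices `u` and `v`
and at most one vertex `x` of maximum degree has degree above `D`. -/
theorem srd_eq {D : ℕ} {x u v : Σ i, Fin (n i)} (hx : ∀ i, n x.1 ≤ n i)
    (hD : ∀ w, w ≠ x → ((multipartite n).neighborSet w).ncard ≤ D) (huv : u ≠ v) (hle : n v.1 ≤ n u.1)
    (hu : ((multipartite n).neighborSet u).ncard = D) : srd (multipartite n) = D := by
  obtain ⟨c, hcD, hc⟩ := exists_coloring_injOn_incidenceSet x hD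
  have hmem : D ∈ {k | ∃ c : Sym2 (Σ i, Fin (n i)) → ℕ,
      (∀ e ∈ (multipartite n).edgeSet, c e < k) ∧ IsSRDColoring (multipartite n) c} :=
    ⟨c, hcD, isSRDColoring_of_injOn_incidenceSet hx hc⟩
  refine le_antisymm (Nat.sInf_le hmem) (le_csInf ⟨D, hmem⟩ ?_)
  rintro m ⟨c, hcm, hsrd⟩
  obtain ⟨F, hF, hcard, hinj⟩ := hsrd u v huv
  rw [← hu, ncard_neighborSet_eq_lam huv hle, ← hcard, ← Finset.card_range m]
  exact Finset.card_le_card_of_injOn c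
    (fun e he => by simpa using hcm e (hF.1 he)) hinj

end Multipartite

theorem stmt8 (k : ℕ) (hk : 2 ≤ k) (n : Fin k → ℕ) (hpos : ∀ i, 1 ≤ n i)
    (hmono : Monotone n) :
    (n ⟨0, by omega⟩ = 1 →
      srd (SimpleGraph.completeMultipartiteGraph (fun i => Fin (n i))) =
        (∑ i, n i) - n ⟨1, by omega⟩) ∧
    (2 ≤ n ⟨0, by omega⟩ →
      srd (SimpleGraph.completeMultipartiteGraph (fun i => Fin (n i))) =
        (∑ i, n i) - n ⟨0, by omega⟩) := by
  have hdeg := fun w : Σ i, Fin (n i) => ncard_neighborSet_add w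
  have hmin : ∀ i, n ⟨0, by omega⟩ ≤ n i := fun i => hmono (Nat.zero_le _)
  let x : Σ i, Fin (n i) := ⟨⟨0, by omega⟩, ⟨0, hpos _⟩⟩
  constructor
  · intro h0
    let u : Σ i, Fin (n i) := ⟨⟨1, by omega⟩, ⟨0, hpos _⟩⟩
    refine srd_eq (x := x) (u := u) (v := x) hmin (fun w hw => ?_)
      (fun h => absurd (congrArg (fun y => y.1.1) h) (by simp [u, x])) (hmin _) ?_
    · have hw1 : n ⟨1, by omega⟩ ≤ n w.1 := by
        refine hmono (Fin.mk_le_of_le_val (Nat.one_le_iff_ne_zero.2 fun hz => hw ?_))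
        obtain ⟨⟨i, hi⟩, ⟨a, ha⟩⟩ := w
        obtain rfl : i = 0 := hz
        obtain rfl : a = 0 := by omega
        rfl
      have := hdeg w
      omega
    · have := hdeg u
      simp only [u] at this ⊢
      omega
  · intro h0
    refine srd_eq (x := x) (u := x) (v := ⟨⟨0, by omega⟩, ⟨1, h0⟩⟩) hmin (fun w _ => ?_)
      (fun h => absurd (eq_of_heq (Sigma.mk.inj h).2) (by simp)) le_rfl ?_
    · have := hdeg w
      have := hmin w.1
      omega
    · have := hdeg x
      simp only [x] at this ⊢
      omega
end
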